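/- There is a short exact sequence of abelian groups 0 → ℤ/n → H²(V_n'; ℤ) → ℤ/n → 0, where H²(V_n'; ℤ) is the second group cohomology of V_n' with coefficients in the trivial module ℤ. Equivalently, there exists a subgroup S of H²(V_n'; ℤ) with S ≅ ℤ/n and H²(V_n'; ℤ)/S ≅ ℤ/n. -/

import Mathlib

/-!
The group `V = V_n'` is a finite Heisenberg-type group: `β'α' = ζ α'β'` with `ζ` a central scalar
of order `n`, and `α'ⁿ = β'ⁿ = 1`. Its abelianization is `(ℤ/n)²`, so
`H²(V; ℤ) ≅ Hom(V, ℚ/ℤ) ≅ (ℤ/n)²`, and the short exact sequence is the split one. The isomorphism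
is made explicit on inhomogeneous cocycles, without `ℚ/ℤ`.

For `x` with `xⁿ = 1`, the map `cycEval` sends a 2-cocycle `c` to `∑_{i<n} c(xⁱ, x) mod n`. The sum
telescopes to `n · h(x)` when `c` is the coboundary of `h`, so `cycEval` factors through `H²`. The
pair of evaluations at `α'` and `β'` is the isomorphism `H²(V; ℤ) ≅ (ℤ/n)²` (`exists_H2_equiv`).

* Injectivity (`mem_coboundaries_of_cycEval_eq_zero`): with `N = |V|` and `s(x) = ∑_w c(x, w)`, the
  cocycle identity gives `N · c = ds`. If both evaluations vanish, then `N ∣ s(α')` and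
  `N ∣ s(β')`, hence `N ∣ s` everywhere and `c = d(s/N)`.
* Surjectivity (`exists_cocycle_of_hom`): a homomorphism `φ : V → ℤ/n` lifts to a function
  `h : V → ℤ`, and the cocycle `dh / n` has evaluation `φ(x)` at `x`. The homomorphisms dual to
  `α'` and `β'` are read off from the commutators with `β'` and `α'`, which are powers of `ζ`
  (`exists_hom_of_heisenberg`).
-/

open Matrix Complex

/-- `ζ = exp(2πi/n)`. -/
noncomputable def zetaC (n : ℕ) : ℂ := Complex.exp (2 * Real.pi * Complex.I / n)

/-- The cyclic permutation matrix `α'`, with `α'_{ij} = 1` iff `i ≡ j + 1 (mod n)`. -/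
noncomputable def alphaM (n : ℕ) : Matrix (Fin n) (Fin n) ℂ :=
  fun i j => if (i : ℕ) = ((j : ℕ) + 1) % n then 1 else 0

/-- The diagonal matrix `β' = diag(ζ, ζ², …, ζ^{n−1}, 1)`. -/
noncomputable def betaM (n : ℕ) : Matrix (Fin n) (Fin n) ℂ :=
  Matrix.diagonal fun i => zetaC n ^ ((i : ℕ) + 1)

/-- `α'` as an element of the unitary group. -/
noncomputable def aU (n : ℕ) (hA : alphaM n ∈ Matrix.unitaryGroup (Fin n) ℂ) :
    Matrix.unitaryGroup (Fin n) ℂ := ⟨alphaM n, hA⟩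

/-- `β'` as an element of the unitary group. -/
noncomputable def bU (n : ℕ) (hB : betaM n ∈ Matrix.unitaryGroup (Fin n) ℂ) :
    Matrix.unitaryGroup (Fin n) ℂ := ⟨betaM n, hB⟩

/-- The scalar matrix `ζ·I` as an element of the unitary group. -/
noncomputable def sU (n : ℕ)
    (hS : zetaC n • (1 : Matrix (Fin n) (Fin n) ℂ) ∈ Matrix.unitaryGroup (Fin n) ℂ) :
    Matrix.unitaryGroup (Fin n) ℂ := ⟨zetaC n • (1 : Matrix (Fin n) (Fin n) ℂ), hS⟩

/-- `V_n'`, the subgroup of `U_n` generated by `α'` and `β'`. -/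
noncomputable def Vgrp (n : ℕ) (hA : alphaM n ∈ Matrix.unitaryGroup (Fin n) ℂ)
    (hB : betaM n ∈ Matrix.unitaryGroup (Fin n) ℂ) :
    Subgroup (Matrix.unitaryGroup (Fin n) ℂ) :=
  Subgroup.closure {aU n hA, bU n hB}

/-- `W_n`, the subgroup of `U_n` generated by `β'` and the scalar matrix `ζ·I`. -/
noncomputable def Wgrp (n : ℕ) (hB : betaM n ∈ Matrix.unitaryGroup (Fin n) ℂ)
    (hS : zetaC n • (1 : Matrix (Fin n) (Fin n) ℂ) ∈ Matrix.unitaryGroup (Fin n) ℂ) :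
    Subgroup (Matrix.unitaryGroup (Fin n) ℂ) :=
  Subgroup.closure {bU n hB, sU n hS}


/-! ### Groups of Heisenberg type -/

section GroupTheory

/-- If `a` and `b` commute up to a `z` of order `n` that commutes with both, then `⟨a, b⟩` has a
homomorphism to `ℤ/n` with `a ↦ 1` and `b ↦ 0`: it sends `g` to the exponent `k` in
`g b g⁻¹ b⁻¹ = z ^ k`. -/
theorem exists_hom_of_heisenberg {U : Type*} [Group U] (n : ℕ) {a b z : U}
    (haz : Commute a z) (hbz : Commute b z) (hab : a * b = z * b * a) (hz : orderOf z = n) :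
    ∃ φ : Subgroup.closure {a, b} → ZMod n, (∀ x y, φ (x * y) = φ x + φ y) ∧
      (∀ x : Subgroup.closure {a, b}, (x : U) = a → φ x = 1) ∧
      (∀ x : Subgroup.closure {a, b}, (x : U) = b → φ x = 0) := by
  have key : ∀ g ∈ Subgroup.closure {a, b}, Commute g z ∧ ∃ k : ℤ, g * b = z ^ k * b * g := by
    intro g hg
    induction hg using Subgroup.closure_induction with
    | mem x hx =>
      rcases hx with rfl | rfl
      · exact ⟨haz, 1, by simpa using hab⟩
      · exact ⟨hbz, 0, by simp⟩
    | one => exact ⟨Commute.one_left z, 0, by simp⟩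
    | mul x y _ _ hx hy =>
      obtain ⟨hxz, k, hk⟩ := hx
      obtain ⟨hyz, l, hl⟩ := hy
      refine ⟨hxz.mul_left hyz, l + k, ?_⟩
      calc x * y * b = x * (y * b) := mul_assoc _ _ _
        _ = (x * z ^ l) * b * y := by rw [hl]; group
        _ = z ^ l * (x * b) * y := by rw [(hxz.zpow_right l).eq]; group
        _ = _ := by rw [hk, _root_.zpow_add]; group
    | inv x _ hx =>
      obtain ⟨hxz, k, hk⟩ := hx
      refine ⟨hxz.inv_left, -k, ?_⟩
      have h1 : Commute x⁻¹ (z ^ (-k)) := hxz.inv_left.zpow_right _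
      calc x⁻¹ * b = x⁻¹ * (z ^ (-k) * (z ^ k * b * x)) * x⁻¹ := by group
        _ = x⁻¹ * z ^ (-k) * (x * b) * x⁻¹ := by rw [← hk]; group
        _ = z ^ (-k) * b * x⁻¹ := by rw [h1.eq]; group
  choose k hk using fun x : Subgroup.closure {a, b} => (key x x.2).2
  have uniq : ∀ (x : Subgroup.closure {a, b}) (m : ℤ), (x : U) * b = z ^ m * b * x →
      ((k x : ℤ) : ZMod n) = m := by
    intro x m hm
    rw [hk x] at hm
    have := mul_right_cancel (mul_right_cancel hm)
    rw [ZMod.intCast_eq_intCast_iff, ← hz]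
    exact zpow_eq_zpow_iff_modEq.mp this
  refine ⟨fun x => (k x : ZMod n), fun x y => ?_, fun x hx => ?_, fun x hx => ?_⟩
  · change ((k (x * y) : ℤ) : ZMod n) = k x + k y
    rw [uniq (x * y) (k y + k x)]
    · push_cast; ring
    · have hxz := (key x x.2).1
      push_cast
      calc (x : U) * y * b = x * (y * b) := mul_assoc _ _ _
        _ = (x * z ^ k y) * b * y := by rw [hk]; group
        _ = z ^ k y * (x * b) * y := by rw [(hxz.zpow_right _).eq]; group
        _ = _ := by rw [hk, _root_.zpow_add]; group
  · exact (uniq x 1 (by simpa [hx] using hab)).trans (by simp)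
  · exact (uniq x 0 (by simp [hx])).trans (by simp)

/-- Finiteness holds because every element of `⟨a, b⟩` has the normal form
`z ^ k * b ^ i * a ^ j`. -/
theorem finite_closure_of_heisenberg {U : Type*} [Group U] (n : ℕ) (hn : 0 < n) {a b z : U}
    (haz : Commute a z) (hbz : Commute b z) (hab : a * b = z * b * a)
    (ha : a ^ n = 1) (hb : b ^ n = 1) (hz : z ^ n = 1) :
    Finite (Subgroup.closure {a, b}) := by
  have hba : ∀ i : ℤ, a * b ^ i = z ^ i * b ^ i * a := by
    intro i
    have h1 : a * b * a⁻¹ = z * b := by rw [hab]; group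
    have h2 : a * b ^ i * a⁻¹ = z ^ i * b ^ i := by
      rw [← conj_zpow, h1, hbz.symm.mul_zpow]
    rw [← h2]; group
  have key : ∀ g ∈ Subgroup.closure {a, b}, ∃ k i j : ℤ, g = z ^ k * b ^ i * a ^ j := by
    intro g hg
    induction hg using Subgroup.closure_induction_left with
    | one => exact ⟨0, 0, 0, by simp⟩
    | mul_left x hx y _ hy =>
      obtain ⟨k, i, j, rfl⟩ := hy
      rcases hx with rfl | rfl
      · refine ⟨k + i, i, 1 + j, ?_⟩
        calc _ = (x * z ^ k) * b ^ i * x ^ j := by group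
          _ = z ^ k * (x * b ^ i) * x ^ j := by rw [(haz.zpow_right k).eq]; group
          _ = _ := by rw [hba]; group
      · refine ⟨k, 1 + i, j, ?_⟩
        calc _ = (x * z ^ k) * x ^ i * a ^ j := by group
          _ = _ := by rw [(hbz.zpow_right k).eq]; group
    | inv_mul_cancel x hx y _ hy =>
      obtain ⟨k, i, j, rfl⟩ := hy
      rcases hx with rfl | rfl
      · refine ⟨k - i, i, -1 + j, ?_⟩
        rw [inv_mul_eq_iff_eq_mul]
        calc _ = z ^ (k - i) * (z ^ i * b ^ i * x) * x ^ (-1 + j) := by group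
          _ = (z ^ (k - i) * x) * b ^ i * x ^ (-1 + j) := by rw [← hba]; group
          _ = _ := by rw [← (haz.zpow_right _).eq]; group
      · refine ⟨k, -1 + i, j, ?_⟩
        calc _ = (x⁻¹ * z ^ k) * x ^ i * a ^ j := by group
          _ = _ := by rw [(hbz.inv_left.zpow_right k).eq]; group
  have fin : ∀ c : U, c ^ n = 1 → Finite (Subgroup.zpowers c) := fun c hc =>
    (isOfFinOrder_iff_pow_eq_one.mpr ⟨n, hn, hc⟩).finite_zpowers
  have := fin a ha
  have := fin b hb
  have := fin z hz
  refine (Set.finite_range fun p : Subgroup.zpowers z × Subgroup.zpowers b × Subgroup.zpowers a =>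
    (p.1 : U) * p.2.1 * p.2.2).subset ?_
  intro g hg
  obtain ⟨k, i, j, rfl⟩ := key g hg
  exact ⟨(⟨z ^ k, k, rfl⟩, ⟨b ^ i, i, rfl⟩, ⟨a ^ j, j, rfl⟩), rfl⟩

end GroupTheory

/-! ### Degree-two cohomology with trivial integer coefficients -/

section Cohomology

open groupCohomology

variable {G : Type} [Group G]

theorem cocycle_eq (c : cocycles₂ (Rep.trivial ℤ G ℤ)) (x y w : G) :
    (c (x * y, w) + c (x, y) : ℤ) = c (y, w) + c (x, y * w) := by
  simpa using (mem_cocycles₂_iff (A := Rep.trivial ℤ G ℤ) _).1 c.2 x y w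

/-- The telescoping sum of the coboundary of `h` along the cyclic group generated by `a`. -/
theorem sum_range_d {R : Type*} [CommRing R] (n : ℕ) (a : G) (ha : a ^ n = 1) (h : G → R) :
    ∑ i ∈ Finset.range n, (h (a ^ i) + h a - h (a ^ i * a)) = n * h a := by
  have := Finset.sum_range_sub (fun i => h (a ^ i)) n
  simp only [ha, pow_zero, sub_self, pow_succ, Finset.sum_sub_distrib] at this
  simp only [Finset.sum_sub_distrib, Finset.sum_add_distrib, Finset.sum_const, Finset.card_range,
    nsmul_eq_mul]
  linear_combination -this

/-- Evaluation of a 2-cocycle `c` along the powers of `a`: the class of `∑_{i<n} c(aⁱ, a)` modulo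
`n`. When `a ^ n = 1`, it computes the restriction of the class of `c` along `ℤ/n → G`, `1 ↦ a`,
under the usual identification `H²(ℤ/n; ℤ) ≅ ℤ/n`. -/
noncomputable def cycEval (n : ℕ) (a : G) : cocycles₂ (Rep.trivial ℤ G ℤ) →ₗ[ℤ] ZMod n :=
  AddMonoidHom.toIntLinearMap
    { toFun := fun c => ((∑ i ∈ Finset.range n, (c (a ^ i, a) : ℤ) : ℤ) : ZMod n)
      map_zero' := by
        have : ∀ x, (0 : cocycles₂ (Rep.trivial ℤ G ℤ)) x = (0:ℤ) := fun _ => rfl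
        simp [this]
      map_add' := fun c d => by
        have : ∀ x, (c + d) x = (c x + d x : ℤ) := fun _ => rfl
        simp [this, Finset.sum_add_distrib] }

theorem cycEval_apply (n : ℕ) (a : G) (c : cocycles₂ (Rep.trivial ℤ G ℤ)) :
    cycEval n a c = ((∑ i ∈ Finset.range n, (c (a ^ i, a) : ℤ) : ℤ) : ZMod n) := rfl

theorem mem_coboundaries_iff (f : G × G → ℤ) :
    f ∈ coboundaries₂ (Rep.trivial ℤ G ℤ) ↔
      ∃ h : G → ℤ, ∀ x y, f (x, y) = h x + h y - h (x * y) := by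
  constructor
  · rintro ⟨h, rfl⟩
    refine ⟨h, fun x y => ?_⟩
    simp [d₁₂_hom_apply]
    ring
  · rintro ⟨h, hh⟩
    refine ⟨h, ?_⟩
    ext ⟨x, y⟩
    rw [hh]
    simp [d₁₂_hom_apply]
    ring

theorem cycEval_eq_zero_of_mem (n : ℕ) (a : G) (ha : a ^ n = 1)
    (c : cocycles₂ (Rep.trivial ℤ G ℤ)) (hc : ⇑c ∈ coboundaries₂ (Rep.trivial ℤ G ℤ)) :
    cycEval n a c = 0 := by
  obtain ⟨h, hh⟩ := (mem_coboundaries_iff _).1 hc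
  rw [cycEval_apply, Finset.sum_congr rfl fun i _ => hh (a ^ i) a, sum_range_d n a ha h]
  simp

/-- A 2-cocycle on a finite group is a coboundary as soon as its evaluations vanish along a
generating set of elements killed by `n`. -/
theorem mem_coboundaries_of_cycEval_eq_zero [Finite G] (n : ℕ) (hn : 0 < n) (S : Set G)
    (hS : Subgroup.closure S = ⊤) (hSn : ∀ a ∈ S, a ^ n = 1)
    (c : cocycles₂ (Rep.trivial ℤ G ℤ)) (hc : ∀ a ∈ S, cycEval n a c = 0) :
    ⇑c ∈ coboundaries₂ (Rep.trivial ℤ G ℤ) := by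
  have := Fintype.ofFinite G
  obtain ⟨N, hN⟩ : ∃ N : ℤ, N = (Fintype.card G : ℕ) := ⟨_, rfl⟩
  have hN0 : N ≠ 0 := by simp [hN]
  let s : G → ℤ := fun x => ∑ w, (c (x, w) : ℤ)
  have hs : ∀ x y, N * c (x, y) = s x + s y - s (x * y) := by
    intro x y
    have h1 : ∑ w, (c (x * y, w) + c (x, y) : ℤ) = ∑ w, (c (y, w) + c (x, y * w) : ℤ) :=
      Finset.sum_congr rfl fun w _ => cocycle_eq c x y w
    have h2 : ∑ w, (c (x, y * w) : ℤ) = s x :=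
      Fintype.sum_equiv (Equiv.mulLeft y) _ _ fun _ => rfl
    rw [Finset.sum_add_distrib, Finset.sum_add_distrib, h2, Finset.sum_const, Finset.card_univ,
      nsmul_eq_mul, ← hN] at h1
    simp only [s] at h1 ⊢
    linear_combination h1
  -- By `hs`, the function `s` is a homomorphism modulo `N`; `K` below is its kernel.
  have hone : N ∣ s 1 := ⟨c (1, 1), by rw [hs]; simp⟩
  let K : Subgroup G :=
    { carrier := {x | N ∣ s x}
      one_mem' := hone
      mul_mem' := fun {x y} hx hy => by
        have : s (x * y) = s x + s y - N * c (x, y) := by rw [hs]; ring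
        change N ∣ s (x * y)
        rw [this]
        exact dvd_sub (dvd_add hx hy) (dvd_mul_right _ _)
      inv_mem' := fun {x} hx => by
        have : s x⁻¹ = N * c (x, x⁻¹) + s 1 - s x := by rw [hs]; simp
        change N ∣ s x⁻¹
        rw [this]
        exact dvd_sub (dvd_add (dvd_mul_right _ _) hone) hx }
  have hK : K = ⊤ := by
    rw [eq_top_iff, ← hS, Subgroup.closure_le]
    intro a ha
    have h1 := hc a ha
    rw [cycEval_apply, ZMod.intCast_zmod_eq_zero_iff_dvd] at h1
    obtain ⟨t, ht⟩ := h1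
    have h2 : N * ∑ i ∈ Finset.range n, (c (a ^ i, a) : ℤ) = n * s a := by
      rw [Finset.mul_sum, Finset.sum_congr rfl fun i _ => hs (a ^ i) a]
      exact sum_range_d n a (hSn a ha) s
    rw [ht] at h2
    refine ⟨t, ?_⟩
    have hn' : (n : ℤ) ≠ 0 := by exact_mod_cast hn.ne'
    apply mul_left_cancel₀ hn'
    linear_combination -h2
  have hdiv : ∀ x, ∃ t, s x = N * t := fun x => by
    have : x ∈ K := hK ▸ Subgroup.mem_top x
    exact this
  choose h hh using hdiv
  refine (mem_coboundaries_iff _).2 ⟨h, fun x y => ?_⟩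
  apply mul_left_cancel₀ hN0
  rw [hs, hh, hh, hh]
  ring

/-- The connecting map `Hom(G, ℤ/n) → H²(G; ℤ)` on cocycles: the coboundary of an integer lift of
`φ`, divided by `n`. Its evaluation at `a` recovers `φ a`. -/
theorem exists_cocycle_of_hom (n : ℕ) (hn : 0 < n) (φ : G → ZMod n)
    (hφ : ∀ x y, φ (x * y) = φ x + φ y) :
    ∃ c : cocycles₂ (Rep.trivial ℤ G ℤ), ∀ a : G, a ^ n = 1 → cycEval n a c = φ a := by
  have : NeZero n := ⟨hn.ne'⟩
  have hn' : (n : ℤ) ≠ 0 := by exact_mod_cast hn.ne'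
  let h : G → ℤ := fun x => (φ x).val
  have hcast : ∀ x, ((h x : ℤ) : ZMod n) = φ x := fun x => by simp [h]
  have hdiv : ∀ p : G × G, ∃ t, h p.1 + h p.2 - h (p.1 * p.2) = n * t := fun p => by
    change (n : ℤ) ∣ _
    rw [← ZMod.intCast_zmod_eq_zero_iff_dvd]
    push_cast
    rw [hcast, hcast, hcast, hφ]
    ring
  choose c hc using hdiv
  have hmem : c ∈ cocycles₂ (Rep.trivial ℤ G ℤ) := by
    rw [mem_cocycles₂_iff]
    intro x y w
    change c (x * y, w) + c (x, y) = c (y, w) + c (x, y * w)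
    apply mul_left_cancel₀ hn'
    rw [mul_add, mul_add, ← hc, ← hc, ← hc, ← hc]
    simp only [mul_assoc]
    ring
  refine ⟨⟨c, hmem⟩, fun a ha => ?_⟩
  have h2 : (n : ℤ) * ∑ i ∈ Finset.range n, c (a ^ i, a) = n * h a := by
    rw [Finset.mul_sum, Finset.sum_congr rfl fun i _ => (hc (a ^ i, a)).symm]
    exact sum_range_d n a ha h
  rw [cycEval_apply, ← hcast]
  exact congrArg _ (mul_left_cancel₀ hn' h2)

/-- If a finite group is generated by two elements `a`, `b` killed by `n` and has homomorphisms
`φ`, `ψ` to `ℤ/n` dual to them, then the evaluations at `a` and `b` identify `H²(G; ℤ)` with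
`(ℤ/n)²`. -/
theorem exists_H2_equiv [Finite G] (n : ℕ) (hn : 0 < n) (a b : G)
    (hab : Subgroup.closure {a, b} = ⊤) (ha : a ^ n = 1) (hb : b ^ n = 1)
    (φ ψ : G → ZMod n) (hφ : ∀ x y, φ (x * y) = φ x + φ y) (hψ : ∀ x y, ψ (x * y) = ψ x + ψ y)
    (hφa : φ a = 1) (hφb : φ b = 0) (hψa : ψ a = 0) (hψb : ψ b = 1) :
    Nonempty (groupCohomology (Rep.trivial ℤ G ℤ) 2 ≃+ ZMod n × ZMod n) := by
  let e := (cycEval n a).prod (cycEval n b)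
  have he : Function.Surjective e := by
    rintro ⟨s, t⟩
    obtain ⟨c, hc⟩ := exists_cocycle_of_hom n hn (fun x => s * φ x + t * ψ x)
      (fun x y => by rw [hφ, hψ]; ring)
    refine ⟨c, Prod.ext ?_ ?_⟩
    · exact (hc a ha).trans (by simp [hφa, hψa])
    · exact (hc b hb).trans (by simp [hφb, hψb])
  let p := (H2π (Rep.trivial ℤ G ℤ)).hom
  have hp : Function.Surjective p := (ModuleCat.epi_iff_surjective _).1 inferInstance
  have hker : LinearMap.ker p = LinearMap.ker e := by
    ext c
    rw [LinearMap.mem_ker, LinearMap.mem_ker]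
    refine (H2π_eq_zero_iff c).trans ⟨fun h => Prod.ext ?_ ?_, fun h => ?_⟩
    · exact cycEval_eq_zero_of_mem n a ha c h
    · exact cycEval_eq_zero_of_mem n b hb c h
    · refine mem_coboundaries_of_cycEval_eq_zero n hn {a, b} hab ?_ c ?_
      · rintro x (rfl | rfl) <;> assumption
      · rintro x (rfl | rfl)
        · exact congrArg Prod.fst h
        · exact congrArg Prod.snd h
  exact ⟨((p.quotKerEquivOfSurjective hp).symm.trans
    ((Submodule.quotEquivOfEq _ _ hker).trans (e.quotKerEquivOfSurjective he))).toAddEquiv⟩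

end Cohomology

/-! ### The clock and shift matrices -/

section Matrices

theorem zetaC_prim (n : ℕ) (hn : n ≠ 0) : IsPrimitiveRoot (zetaC n) n :=
  Complex.isPrimitiveRoot_exp n hn

theorem alphaM_pow_apply (n k : ℕ) (i j : Fin n) :
    (alphaM n ^ k) i j = if (i : ℕ) = ((j : ℕ) + k) % n then 1 else 0 := by
  induction k generalizing i with
  | zero => simp [Matrix.one_apply, Nat.mod_eq_of_lt j.2, Fin.ext_iff]
  | succ k ih =>
    have hn : 0 < n := j.pos
    rw [pow_succ', Matrix.mul_apply,
      Finset.sum_eq_single (⟨((j : ℕ) + k) % n, Nat.mod_lt _ hn⟩ : Fin n)]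
    · rw [ih]; simp [alphaM, add_assoc]
    · intro l _ hl
      rw [ih, if_neg, mul_zero]
      exact fun h => hl (Fin.ext h)
    · simp

theorem alphaM_pow (n : ℕ) : alphaM n ^ n = 1 := by
  ext i j
  simp [alphaM_pow_apply, Matrix.one_apply, Nat.mod_eq_of_lt j.2, Fin.ext_iff]

theorem betaM_pow (n : ℕ) (hn : n ≠ 0) : betaM n ^ n = 1 := by
  rw [betaM, Matrix.diagonal_pow, ← Matrix.diagonal_one]
  congr 1
  ext i
  simp only [Pi.pow_apply]
  rw [← pow_mul, mul_comm, pow_mul, (zetaC_prim n hn).pow_eq_one, one_pow]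

theorem betaM_mul_alphaM (n : ℕ) (hn : n ≠ 0) :
    betaM n * alphaM n = zetaC n • (alphaM n * betaM n) := by
  ext i j
  rw [betaM, Matrix.diagonal_mul, Matrix.smul_apply, Matrix.mul_diagonal, alphaM]
  split_ifs with h
  · have : zetaC n ^ (i : ℕ) = zetaC n ^ ((j : ℕ) + 1) := by
      rw [h, ← pow_eq_pow_mod _ (zetaC_prim n hn).pow_eq_one]
    rw [pow_succ, this]; simp [mul_comm]
  · simp

theorem scalar_mem (n : ℕ) (hn : n ≠ 0) :
    zetaC n • (1 : Matrix (Fin n) (Fin n) ℂ) ∈ Matrix.unitaryGroup (Fin n) ℂ := by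
  rw [Matrix.mem_unitaryGroup_iff]
  have h : ‖zetaC n‖ = 1 := (zetaC_prim n hn).norm'_eq_one hn
  rw [star_smul, star_one, smul_mul_smul_comm, one_mul]
  simp [Complex.mul_conj, Complex.normSq_eq_norm_sq, h]

theorem orderOf_sU (n : ℕ) (hn : n ≠ 0) (hS) : orderOf (sU n hS) = n := by
  have : NeZero n := ⟨hn⟩
  have hp := zetaC_prim n hn
  have hpow : ∀ k : ℕ, sU n hS ^ k = 1 ↔ zetaC n ^ k = 1 := by
    intro k
    rw [Subtype.ext_iff]
    simp only [sU, SubmonoidClass.mk_pow, smul_pow, one_pow, OneMemClass.coe_one]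
    refine ⟨fun h => ?_, fun h => by rw [h, one_smul]⟩
    simpa using congrFun (congrFun h 0) 0
  exact (orderOf_eq_orderOf_iff.mpr hpow).trans hp.eq_orderOf.symm

end Matrices

/-- there is a short exact sequence of abelian groups
`0 → ℤ/n → H²(V_n'; ℤ) → ℤ/n → 0`, where `H²(V_n'; ℤ)` is the second group cohomology of
`V_n'` with coefficients in the trivial module `ℤ`. -/
theorem H2_Vgrp_ses (n : ℕ) (hn : 1 < n)
    (hA : alphaM n ∈ Matrix.unitaryGroup (Fin n) ℂ)
    (hB : betaM n ∈ Matrix.unitaryGroup (Fin n) ℂ) :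
    ∃ (f : ZMod n →+ (groupCohomology (Rep.trivial ℤ (Vgrp n hA hB) ℤ) 2))
      (g : (groupCohomology (Rep.trivial ℤ (Vgrp n hA hB) ℤ) 2) →+ ZMod n),
      Function.Injective f ∧ Function.Surjective g ∧
      f.range = g.ker := by
  have hn0 : n ≠ 0 := by omega
  have hS := scalar_mem n hn0
  have hz := orderOf_sU n hn0 hS
  have haz : Commute (aU n hA) (sU n hS) := Subtype.ext (by simp [aU, sU])
  have hbz : Commute (bU n hB) (sU n hS) := Subtype.ext (by simp [bU, sU])
  have hba : bU n hB * aU n hA = sU n hS * aU n hA * bU n hB :=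
    Subtype.ext (by simpa [aU, bU, sU] using betaM_mul_alphaM n hn0)
  have hab : aU n hA * bU n hB = (sU n hS)⁻¹ * bU n hB * aU n hA := by
    rw [mul_assoc, hba]; group
  have ha : aU n hA ^ n = 1 := Subtype.ext (by simpa [aU] using alphaM_pow n)
  have hb : bU n hB ^ n = 1 := Subtype.ext (by simpa [bU] using betaM_pow n hn0)
  have hzn : ((sU n hS)⁻¹) ^ n = 1 := by
    rw [inv_pow, inv_eq_one]
    exact orderOf_dvd_iff_pow_eq_one.mp hz.dvd
  have hfin : Finite (Vgrp n hA hB) :=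
    finite_closure_of_heisenberg n (by omega) haz.inv_right hbz.inv_right hab ha hb hzn
  obtain ⟨φ, hφ, hφa, hφb⟩ := exists_hom_of_heisenberg n haz.inv_right hbz.inv_right hab
    ((orderOf_inv _).trans hz)
  -- Exchanging the two generators replaces the commutator `ζ⁻¹` by `ζ`.
  have hswap := exists_hom_of_heisenberg n hbz haz hba hz
  rw [Set.pair_comm] at hswap
  obtain ⟨ψ, hψ, hψb, hψa⟩ := hswap
  let a : Vgrp n hA hB := ⟨aU n hA, Subgroup.subset_closure (by simp)⟩
  let b : Vgrp n hA hB := ⟨bU n hB, Subgroup.subset_closure (by simp)⟩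
  have hgen : Subgroup.closure {a, b} = ⊤ := by
    refine Eq.trans ?_ (Subgroup.closure_closure_coe_preimage (k := {aU n hA, bU n hB}))
    change Subgroup.closure {a, b} = Subgroup.closure (G := Vgrp n hA hB) _
    congr 1
    ext x
    exact or_congr Subtype.ext_iff Subtype.ext_iff
  obtain ⟨E⟩ := exists_H2_equiv n (by omega) a b hgen (Subtype.ext ha) (Subtype.ext hb) φ ψ hφ hψ
    (hφa a rfl) (hφb b rfl) (hψa a rfl) (hψb b rfl)
  refine ⟨E.symm.toAddMonoidHom.comp (AddMonoidHom.inl _ _),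
    (AddMonoidHom.snd _ _).comp E.toAddMonoidHom, ?_, ?_, ?_⟩
  · exact E.symm.injective.comp fun x y h => congrArg Prod.fst h
  · exact Prod.snd_surjective.comp E.surjective
  · ext x
    constructor
    · rintro ⟨s, rfl⟩
      exact congrArg Prod.snd (E.apply_symm_apply (s, 0))
    · intro hx
      refine ⟨(E x).1, E.injective ?_⟩
      exact (E.apply_symm_apply _).trans (Prod.ext rfl (Eq.symm hx))
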